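/- The sum over all two-connected graphs G on vertex set {1,...,n} of (-1)^(e(G)) times the volume of the polytope Π_G equals -n·(n-2)!. -/

import Mathlib

open scoped Classical
open MeasureTheory

/-- A graph is two-connected if it is connected and remains connected after
deleting any single vertex (and its incident edges). -/
def TwoConnected {V : Type*} (G : SimpleGraph V) : Prop :=
  G.Connected ∧ ∀ v : V, (G.induce ({v}ᶜ : Set V)).Connected

/-- The polytope `Π_G` associated with a graph `G` on `{1, ..., n+1}`:
points `(x_2, ..., x_{n+1}) ∈ ℝ^n` with `x_1 := 0` and `|x_i - x_j| < 1`
for every edge `{i,j}` of `G`. -/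
def graphPolytope (n : ℕ) (G : SimpleGraph (Fin (n + 1))) : Set (Fin n → ℝ) :=
  {y | ∀ i j : Fin (n + 1), G.Adj i j →
    |(Fin.cons (0 : ℝ) y : Fin (n + 1) → ℝ) i - (Fin.cons (0 : ℝ) y : Fin (n + 1) → ℝ) j| < 1}

/-- Every predicate propagating along the edges of `E` inside `S` is constant on `S`,
i.e. the graph with edge set `E` is connected on `S` (or `S` is empty). -/
def ConnOn {V : Type*} (S : Finset V) (E : V → V → Prop) : Prop :=
  ∀ A : V → Prop, (∀ x ∈ S, ∀ y ∈ S, E x y → A x → A y) →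
    ∀ x ∈ S, ∀ y ∈ S, A x → A y

/-- The graph obtained from `E` by adding the edge `ab`. -/
def addEdge {V : Type*} (E : V → V → Prop) (a b x y : V) : Prop :=
  E x y ∨ x = a ∧ y = b ∨ x = b ∧ y = a

/-- The graph with edge set `E` is two-connected on `S`. -/
def TwoConnOn {V : Type*} [DecidableEq V] (S : Finset V) (E : V → V → Prop) : Prop :=
  2 ≤ S.card ∧ ConnOn S E ∧ ∀ c, ConnOn (S.erase c) E

/-- `B` is the block containing `a` in a graph which becomes two-connected on `S` after adding
the edge `ab`, and `c` is the cut vertex through which this block leads to `b`. -/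
def IsFirstBlock {V : Type*} [DecidableEq V] (S : Finset V) (b : V) (E : V → V → Prop)
    (B : Finset V) (c : V) : Prop :=
  TwoConnOn B E ∧ ConnOn (insert c (S \ B)) E ∧
    TwoConnOn (insert c (S \ B)) (addEdge E c b) ∧
    ∀ x ∈ B, ∀ y ∈ S \ B, E x y → x = c

section Blocks

variable {V : Type*} [DecidableEq V] {S B B' : Finset V} {E F : V → V → Prop} {a b c c' : V}

omit [DecidableEq V] in
theorem ConnOn.mono (h : ConnOn S E) (hEF : ∀ x y, E x y → F x y) : ConnOn S F :=
  fun A hA => h A fun x hx y hy hxy => hA x hx y hy (hEF x y hxy)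

theorem TwoConnOn.mono (h : TwoConnOn S E) (hEF : ∀ x y, E x y → F x y) : TwoConnOn S F :=
  ⟨h.1, h.2.1.mono hEF, fun c => (h.2.2 c).mono hEF⟩

omit [DecidableEq V] in
theorem connOn_congr (h : ∀ x ∈ S, ∀ y ∈ S, E x y ↔ F x y) :
    ConnOn S E ↔ ConnOn S F := by
  constructor <;> intro hc A hA <;> refine hc A fun x hx y hy hxy => hA x hx y hy ?_
  · exact (h x hx y hy).1 hxy
  · exact (h x hx y hy).2 hxy

theorem twoConnOn_congr (h : ∀ x ∈ S, ∀ y ∈ S, E x y ↔ F x y) :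
    TwoConnOn S E ↔ TwoConnOn S F := by
  unfold TwoConnOn
  rw [connOn_congr h]
  have := fun c => connOn_congr (S := S.erase c) (E := E) (F := F)
    fun x hx y hy => h x (Finset.mem_of_mem_erase hx) y (Finset.mem_of_mem_erase hy)
  simp only [this]

omit [DecidableEq V] in
theorem addEdge_iff {x y : V} :
    addEdge E a b x y ↔ E x y ∨ x = a ∧ y = b ∨ x = b ∧ y = a :=
  Iff.rfl

theorem IsFirstBlock.twoConnOn_insert (haB : a ∈ B) (hBS : B ⊆ S) (hbS : b ∈ S) (hbB : b ∉ B)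
    (hcB : c ∈ B) (hca : c ≠ a) (h : IsFirstBlock S b E B c) :
    TwoConnOn S (addEdge E a b) := by
  obtain ⟨⟨h2, hB, hBe⟩, hY, ⟨-, -, hYe⟩, -⟩ := h
  refine ⟨h2.trans (Finset.card_le_card hBS), ?_, ?_⟩
  · intro A hA x hx y hy
    have h1 := hB A fun x hx y hy hxy => hA x (hBS hx) y (hBS hy) (Or.inl hxy)
    have h3 := hY A fun x hx y hy hxy => hA x (by grind) y (by grind) (Or.inl hxy)
    grind
  · intro u A hA x hx y hy
    simp only [addEdge_iff] at hA
    have h1 := hBe u A fun x hx y hy hxy => hA x (by grind) y (by grind) (Or.inl hxy)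
    by_cases huc : u = c
    · subst huc
      have h3 := hYe u A fun x hx y hy hxy => hA x (by grind) y (by grind) (by
        rw [addEdge_iff] at hxy
        grind)
      have h4 := hA a (by grind) b (by grind) (by simp)
      have h5 := hA b (by grind) a (by grind) (by simp)
      grind
    by_cases huB : u ∈ B
    · have h3 := hY A fun x hx y hy hxy => hA x (by grind) y (by grind) (Or.inl hxy)
      have hc : ∀ z ∈ S.erase u, A z ↔ A c := fun z hz => by
        by_cases hzB : z ∈ B
        · exact ⟨h1 z (by grind) c (by grind), h1 c (by grind) z (by grind)⟩
        · exact ⟨h3 z (by grind) c (by grind), h3 c (by grind) z (by grind)⟩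
      exact fun h => (hc y hy).2 ((hc x hx).1 h)
    have h6 := hB A fun x hx y hy hxy => hA x (by grind) y (by grind) (Or.inl hxy)
    have h3 := hYe u A fun x hx y hy hxy => by
      rw [addEdge_iff] at hxy
      have h4 := hA a (by grind) b
      have h5 := hA b
      grind
    grind

theorem IsFirstBlock.not_twoConnOn (haB : a ∈ B) (hBS : B ⊆ S) (hbS : b ∈ S) (hbB : b ∉ B)
    (hcB : c ∈ B) (hca : c ≠ a) (h : IsFirstBlock S b E B c) : ¬ TwoConnOn S E := by
  intro h2
  have := h2.2.2 c (fun x => x ∈ B) (fun x hx y hy hxy hxB => by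
    by_contra hyB
    have := h.2.2.2 x hxB y (by grind) hxy
    grind) a (by grind) b (by grind) haB
  grind

theorem IsFirstBlock.subset (haB : a ∈ B) (haB' : a ∈ B') (hBS' : B' ⊆ S)
    (hcB : c ∈ B) (hca : c ≠ a) (h : IsFirstBlock S b E B c) (h' : IsFirstBlock S b E B' c') :
    B' ⊆ B := by
  intro x hx
  by_cases hxc : x = c
  · grind
  refine h'.1.2.2 c (fun x => x ∈ B) (fun x hx y hy hxy hxB => ?_) a (by grind) x (by grind) haB
  by_contra hyB
  have := h.2.2.2 x hxB y (by grind) hxy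
  grind

theorem IsFirstBlock.unique (haB : a ∈ B) (haB' : a ∈ B') (hBS : B ⊆ S) (hBS' : B' ⊆ S)
    (hbS : b ∈ S) (hbB : b ∉ B) (hcB : c ∈ B) (hcB' : c' ∈ B') (hca : c ≠ a) (hca' : c' ≠ a)
    (h : IsFirstBlock S b E B c) (h' : IsFirstBlock S b E B' c') : B = B' ∧ c = c' := by
  have hBB : B = B' := (h'.subset haB' haB hBS hcB' hca' h).antisymm
    (h.subset haB haB' hBS' hcB hca h')
  subst hBB
  refine ⟨rfl, ?_⟩
  by_contra hcc
  have := h.2.1 (fun x => x ∈ B) (fun x hx y hy hxy hxB => by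
    by_contra hyB
    have h1 := h.2.2.2 x hxB y (by grind) hxy
    have h2 := h'.2.2.2 x hxB y (by grind) hxy
    grind) c (by grind) b (by grind) hcB
  grind

theorem connOn_of_twoConnOn_insert (h3 : 3 ≤ S.card) (ha : a ∈ S) (hb : b ∈ S) (hab : a ≠ b)
    (h : TwoConnOn S (addEdge E a b)) : ConnOn S E := by
  intro A hA
  obtain ⟨w, hw, hwa, hwb⟩ : ∃ w ∈ S, w ≠ a ∧ w ≠ b := by
    by_contra! hcon
    have : S ⊆ {a, b} := fun x hx => by
      by_cases hxa : x = a
      · simp [hxa]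
      · simp [hcon x hx hxa]
    have := (Finset.card_le_card this).trans Finset.card_le_two
    omega
  have key : ∀ u, u = a ∨ u = b → ∀ x ∈ S.erase u, ∀ y ∈ S.erase u, A x → A y := fun u hu =>
    h.2.2 u A fun x hx y hy hxy => hA x (by grind) y (by grind) (by
      rw [addEdge_iff] at hxy
      grind)
  have k1 := key a (by simp)
  have k2 := key b (by simp)
  grind

theorem exists_isFirstBlock (hsymm : ∀ x y, E x y → E y x) (h3 : 3 ≤ S.card) (ha : a ∈ S)
    (hb : b ∈ S) (hab : a ≠ b) (h : TwoConnOn S (addEdge E a b)) (hE : ¬ TwoConnOn S E) :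
    ∃ B c, B ⊆ S ∧ a ∈ B ∧ b ∉ B ∧ c ∈ B ∧ c ≠ a ∧ IsFirstBlock S b E B c := by
  have hconn := connOn_of_twoConnOn_insert h3 ha hb hab h
  let P : Finset V → Prop := fun B => ∃ c, B ⊆ S ∧ a ∈ B ∧ b ∉ B ∧ c ∈ B ∧ c ≠ a ∧
    ∀ x ∈ B, ∀ y ∈ S \ B, E x y → x = c
  have hends : ∀ u, u = a ∨ u = b → ConnOn (S.erase u) E := fun u hu =>
    (connOn_congr fun x hx y hy => by rw [addEdge_iff]; grind).1 (h.2.2 u)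
  have mkP : ∀ (u : V) (A : V → Prop), u ∈ S → u ≠ a → u ≠ b → A a → ¬ A b →
      (∀ x ∈ S.erase u, ∀ y ∈ S.erase u, E x y → A x → A y) →
      P (insert u ((S.erase u).filter A)) := by
    intro u A hu hua hub hAa hAb hA
    refine ⟨u, ?_, ?_, ?_, ?_, hua, ?_⟩
    · grind
    · grind
    · grind
    · grind
    · intro x hx y hy hxy
      have := hA x
      grind
  have hP : ∃ B, P B := by
    have : ∃ u, ¬ ConnOn (S.erase u) E := by
      by_contra! hcon
      exact hE ⟨by omega, hconn, hcon⟩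
    obtain ⟨u, hu⟩ := this
    have huS : u ∈ S := by
      by_contra huS
      rw [Finset.erase_eq_of_notMem huS] at hu
      exact hu hconn
    have hua : u ≠ a := fun e => hu (hends u (Or.inl e))
    have hub : u ≠ b := fun e => hu (hends u (Or.inr e))
    unfold ConnOn at hu
    push Not at hu
    obtain ⟨A, hA, x, hx, y, hy, hAx, hAy⟩ := hu
    have hne : ¬ (A a ↔ A b) := by
      intro hiff
      refine hAy (h.2.2 u A (fun x hx y hy hxy => ?_) x hx y hy hAx)
      rw [addEdge_iff] at hxy
      have := hA x hx y hy
      grind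
    by_cases hAa : A a
    · exact ⟨_, mkP u A huS hua hub hAa (by tauto) hA⟩
    · refine ⟨_, mkP u (fun x => ¬ A x) huS hua hub hAa (by tauto) ?_⟩
      intro x hx y hy hxy hx' hy'
      exact hx' (hA y hy x hx (hsymm _ _ hxy) hy')
  obtain ⟨B, hPB, hmin⟩ : ∃ B, P B ∧ ∀ B', P B' → B.card ≤ B'.card := by
    obtain ⟨B, hB, hmin⟩ := WellFounded.has_min (measure (Finset.card (α := V))).wf {B | P B} hP
    exact ⟨B, hB, fun B' hB' => not_lt.1 (hmin B' hB')⟩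
  obtain ⟨c, hBS, haB, hbB, hcB, hca, hcut⟩ := hPB
  have hcut' : ∀ x ∈ S, ∀ y ∈ S, E x y → (x ∈ B ∧ y ∈ B) ∨ (x ∉ B ∧ y ∉ B) ∨
      (x = c ∧ y ∉ B) ∨ (y = c ∧ x ∉ B) := by
    intro x hx y hy hxy
    have h1 := hcut x
    have h2 := hcut y
    have h4 : E y x := hsymm _ _ hxy
    grind
  refine ⟨B, c, hBS, haB, hbB, hcB, hca, ⟨?_, ?_, ?_⟩, ?_, ⟨?_, ?_, ?_⟩, hcut⟩
  · exact Finset.one_lt_card.2 ⟨c, hcB, a, haB, hca⟩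
  · intro A hA
    have := hconn (fun x => if x ∈ B then A x else A c) (by
      intro x hx y hy hxy
      have := hcut' x hx y hy hxy
      have := hA x
      grind)
    grind
  · intro u
    by_cases huB : u ∈ B
    swap
    · rw [Finset.erase_eq_of_notMem huB]
      intro A hA
      have := hconn (fun x => if x ∈ B then A x else A c) (by
        intro x hx y hy hxy
        have := hcut' x hx y hy hxy
        have := hA x
        grind)
      grind
    by_cases huc : u = c
    · subst huc
      intro A hA
      have := h.2.2 u (fun x => if x ∈ B then A x else A a) (by
        intro x hx y hy hxy
        rw [addEdge_iff] at hxy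
        have := hcut' x
        have := hA x
        grind)
      grind
    intro A hA
    have hext : ∀ x ∈ S.erase u, ∀ y ∈ S.erase u, E x y →
        (if x ∈ B then A x else A c) → (if y ∈ B then A y else A c) := by
      intro x hx y hy hxy
      have := hcut' x
      have := hA x
      grind
    by_cases hua : u = a
    · have := hends u (Or.inl hua) _ hext
      grind
    by_cases hac : A a ↔ A c
    · have := h.2.2 u (fun x => if x ∈ B then A x else A c) (by
        intro x hx y hy hxy
        rw [addEdge_iff] at hxy
        have := hext x hx y hy
        grind)
      grind
    exfalso
    have hub : u ≠ b := fun e => hbB (e ▸ huB)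
    by_cases hAa : A a
    · have := hmin _ (mkP u (fun x => if x ∈ B then A x else A c) (hBS huB) hua hub
        (by grind) (by grind) hext)
      refine absurd this (not_le.2 (Finset.card_lt_card ⟨by grind, fun hs => ?_⟩))
      have := hs hcB
      grind
    · have := hmin _ (mkP u (fun x => ¬ if x ∈ B then A x else A c) (hBS huB) hua hub
        (by grind) (by grind)
        fun x hx y hy hxy hx' hy' => hx' (hext y hy x hx (hsymm _ _ hxy) hy'))
      refine absurd this (not_le.2 (Finset.card_lt_card ⟨by grind, fun hs => ?_⟩))
      have := hs hcB
      grind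
  · clear hmin hP mkP
    intro A hA
    have := hconn (fun x => if x ∈ B then A c else A x) (by
      intro x hx y hy hxy
      have := hcut' x hx y hy hxy
      have := hA x
      grind)
    grind
  · exact Finset.one_lt_card.2 ⟨c, by simp, b, by simp [hb, hbB], by grind⟩
  · clear hmin hP mkP
    intro A hA
    simp only [addEdge_iff] at hA
    have := hconn (fun x => if x ∈ B then A c else A x) (by
      intro x hx y hy hxy
      have := hcut' x hx y hy hxy
      have := hA x
      grind)
    grind
  · intro u A hA
    simp only [addEdge_iff] at hA
    by_cases huc : u = c
    · subst huc
      have := h.2.2 u (fun x => if x ∈ B then A b else A x) (by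
        intro x hx y hy hxy
        rw [addEdge_iff] at hxy
        have := hcut' x
        have := hA x
        grind)
      grind
    by_cases hu : u ∈ S \ B
    swap
    · have := hconn (fun x => if x ∈ B then A c else A x) (by
        intro x hx y hy hxy
        have := hcut' x hx y hy hxy
        have := hA x
        grind)
      grind
    have := h.2.2 u (fun x => if x ∈ B then A c else A x) (by
      intro x hx y hy hxy
      rw [addEdge_iff] at hxy
      have := hcut' x
      have := hA x
      have := hA c
      have := hA b
      grind)
    grind

end Blocks

/-- The adjacency relation of a graph given by its set of edges. -/
def edgeRel {V : Type*} (E : Finset (Sym2 V)) (x y : V) : Prop :=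
  s(x, y) ∈ E

/-- The sum of `(-1) ^ |E|` over all subsets `E` of `U` satisfying `p`. -/
noncomputable def signedSum {α : Type*} (U : Finset α) (p : Finset α → Prop) : ℤ :=
  ∑ E ∈ U.powerset.filter p, (-1) ^ E.card

/-- The sum of `(-1) ^ |E|` over the graphs which are two-connected on `S`, with edges in `H`. -/
noncomputable def twoConnSum {V : Type*} [DecidableEq V] (H : Finset (Sym2 V)) (S : Finset V) : ℤ :=
  signedSum (H ∩ S.sym2) fun E => TwoConnOn S (edgeRel E)

theorem signedSum_eq_zero_of_insert {α : Type*} [DecidableEq α] {U : Finset α}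
    {p : Finset α → Prop} {e : α} (he : e ∈ U) (hp : ∀ E ⊆ U, p (insert e E) ↔ p E) :
    signedSum U p = 0 := by
  unfold signedSum
  rw [Finset.sum_filter]
  obtain ⟨U', heU, rfl⟩ : ∃ U', e ∉ U' ∧ insert e U' = U :=
    ⟨U.erase e, by simp, Finset.insert_erase he⟩
  rw [Finset.sum_powerset_insert heU, ← Finset.sum_add_distrib]
  refine Finset.sum_eq_zero fun E hE => ?_
  rw [Finset.mem_powerset] at hE
  rw [Finset.card_insert_of_notMem fun h => heU (hE h)]
  have := hp E (hE.trans (Finset.subset_insert _ _))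
  by_cases h : p E
  · rw [if_pos h, if_pos (this.2 h)]; ring
  · rw [if_neg h, if_neg (mt this.1 h)]; ring

section SignedSums

variable {V : Type*} [DecidableEq V] {S B : Finset V} {H E : Finset (Sym2 V)} {a b c : V}

theorem edgeRel_insert : edgeRel (insert s(a, b) E) = addEdge (edgeRel E) a b := by
  ext x y
  simp [edgeRel, addEdge, or_comm]

omit [DecidableEq V] in
theorem edgeRel_symm (x y : V) (h : edgeRel E x y) : edgeRel E y x := by
  unfold edgeRel at *
  rwa [Sym2.eq_swap]

theorem addEdge_idem (R : V → V → Prop) : addEdge (addEdge R a b) a b = addEdge R a b := by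
  ext x y
  simp only [addEdge]
  tauto

theorem signedSum_isFirstBlock (hH : ∀ x, s(x, x) ∉ H) (hBS : B ⊆ S) (hcB : c ∈ B) :
    signedSum (H ∩ S.sym2) (fun E => IsFirstBlock S b (edgeRel E) B c) =
      twoConnSum H B * signedSum (H ∩ (insert c (S \ B)).sym2) (fun E =>
        ConnOn (insert c (S \ B)) (edgeRel E) ∧
          TwoConnOn (insert c (S \ B)) (addEdge (edgeRel E) c b)) := by
  unfold twoConnSum signedSum
  rw [Finset.sum_mul_sum, ← Finset.sum_product']
  set Y := insert c (S \ B) with hY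
  have hYS : Y ⊆ S := by grind
  have hdisj : ∀ x y, s(x, y) ∈ H → x ∈ B → y ∈ B → x ∈ Y → y ∈ Y → False := by
    intro x y hxy h1 h2 h3 h4
    have : x = c := by grind
    have : y = c := by grind
    grind
  have hinter : ∀ (T : Finset V) (E : Finset (Sym2 V)), ∀ x ∈ T, ∀ y ∈ T,
      edgeRel (E ∩ T.sym2) x y ↔ edgeRel E x y := by
    intro T E x hx y hy
    simp [edgeRel, hx, hy]
  have hadd : ∀ (F F' : Finset (Sym2 V)), (∀ x ∈ Y, ∀ y ∈ Y, edgeRel F x y ↔ edgeRel F' x y) →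
      ∀ x ∈ Y, ∀ y ∈ Y, addEdge (edgeRel F) c b x y ↔ addEdge (edgeRel F') c b x y := by
    intro F F' h x hx y hy
    simp only [addEdge, h x hx y hy]
  have hsplit : ∀ E ⊆ H ∩ S.sym2, IsFirstBlock S b (edgeRel E) B c →
      E ∩ B.sym2 ∪ E ∩ Y.sym2 = E := by
    intro E hE hF
    ext ⟨x, y⟩
    have h1 := fun h : s(x, y) ∈ E => Finset.mem_inter.1 (hE h)
    have h2 := hF.2.2.2 x
    have h3 := hF.2.2.2 y
    have h4 : s(x, y) ∈ E → s(y, x) ∈ E := fun h => by rwa [Sym2.eq_swap]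
    simp only [Finset.mk_mem_sym2_iff, Finset.mem_union, Finset.mem_inter, edgeRel] at *
    clear hF hE hinter hadd hdisj
    grind
  have hU : ∀ E₁ ⊆ H ∩ B.sym2, ∀ E₂ ⊆ H ∩ Y.sym2,
      Disjoint E₁ E₂ ∧ (E₁ ∪ E₂) ∩ B.sym2 = E₁ ∧ (E₁ ∪ E₂) ∩ Y.sym2 = E₂ := by
    intro E₁ h₁ E₂ h₂
    have key : ∀ e ∈ H, e ∈ B.sym2 → e ∈ Y.sym2 → False := by
      rintro ⟨x, y⟩ he hB hY
      simp only [Finset.mk_mem_sym2_iff] at hB hY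
      exact hdisj x y he hB.1 hB.2 hY.1 hY.2
    refine ⟨Finset.disjoint_left.2 fun e he₁ he₂ => ?_, ?_, ?_⟩
    · have := Finset.mem_inter.1 (h₁ he₁)
      have := Finset.mem_inter.1 (h₂ he₂)
      exact key e (by tauto) (by tauto) (by tauto)
    all_goals
      ext e
      have := @h₁ e
      have := @h₂ e
      have := key e
      simp only [Finset.mem_inter, Finset.mem_union] at *
      tauto
  refine Finset.sum_nbij' (fun E => (E ∩ B.sym2, E ∩ Y.sym2)) (fun E => E.1 ∪ E.2) ?_ ?_ ?_ ?_ ?_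
  · intro E hE
    simp only [Finset.mem_filter, Finset.mem_powerset, Finset.mem_product] at hE ⊢
    obtain ⟨hE, hF⟩ := hE
    refine ⟨⟨?_, ?_⟩, ?_, ?_, ?_⟩
    · exact fun e he => by have := @hE e; simp only [Finset.mem_inter] at *; tauto
    · exact (twoConnOn_congr (hinter B E)).2 hF.1
    · exact fun e he => by have := @hE e; simp only [Finset.mem_inter] at *; tauto
    · exact (connOn_congr (hinter Y E)).2 hF.2.1
    · exact (twoConnOn_congr (hadd _ _ (hinter Y E))).2 hF.2.2.1
  · rintro ⟨E₁, E₂⟩ hE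
    simp only [Finset.mem_filter, Finset.mem_powerset, Finset.mem_product] at hE ⊢
    obtain ⟨⟨h₁, h₁'⟩, h₂, h₂', h₂''⟩ := hE
    obtain ⟨-, hB, hY'⟩ := hU E₁ h₁ E₂ h₂
    have r₁ := hinter B (E₁ ∪ E₂)
    have r₂ := hinter Y (E₁ ∪ E₂)
    rw [hB] at r₁
    rw [hY'] at r₂
    refine ⟨?_, (twoConnOn_congr r₁).1 h₁', (connOn_congr r₂).1 h₂',
      (twoConnOn_congr (hadd _ _ r₂)).1 h₂'', ?_⟩
    · refine Finset.union_subset (h₁.trans ?_) (h₂.trans ?_)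
      · exact Finset.inter_subset_inter_left (Finset.sym2_mono hBS)
      · exact Finset.inter_subset_inter_left (Finset.sym2_mono hYS)
    · intro x hx y hy hxy
      have g₁ := @h₁ s(x, y)
      have g₂ := @h₂ s(x, y)
      simp only [Finset.mk_mem_sym2_iff, Finset.mem_inter, edgeRel, Finset.mem_union] at *
      clear hinter hadd r₁ r₂ hsplit
      grind
  · intro E hE
    simp only [Finset.mem_filter, Finset.mem_powerset] at hE
    exact hsplit E hE.1 hE.2
  · rintro ⟨E₁, E₂⟩ hE
    simp only [Finset.mem_filter, Finset.mem_powerset, Finset.mem_product] at hE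
    obtain ⟨-, hB, hY'⟩ := hU E₁ hE.1.1 E₂ hE.2.1
    exact Prod.ext hB hY'
  · intro E hE
    simp only [Finset.mem_filter, Finset.mem_powerset] at hE
    have hd := (hU (E ∩ B.sym2) (Finset.inter_subset_inter_right (hE.1.trans
      Finset.inter_subset_left)) (E ∩ Y.sym2) (Finset.inter_subset_inter_right (hE.1.trans
      Finset.inter_subset_left))).1
    conv_lhs => rw [← hsplit E hE.1 hE.2, Finset.card_union_of_disjoint hd, pow_add]

theorem twoConnSum_eq_neg_sum (hH : ∀ x, s(x, x) ∉ H) (h3 : 3 ≤ S.card) (ha : a ∈ S) (hb : b ∈ S)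
    (hab : s(a, b) ∈ H) :
    twoConnSum H S = -∑ p ∈ (S.powerset ×ˢ S).filter
        (fun p => a ∈ p.1 ∧ b ∉ p.1 ∧ p.2 ∈ p.1 ∧ p.2 ≠ a),
      twoConnSum H p.1 * signedSum (H ∩ (insert p.2 (S \ p.1)).sym2) (fun E =>
        ConnOn (insert p.2 (S \ p.1)) (edgeRel E) ∧
          TwoConnOn (insert p.2 (S \ p.1)) (addEdge (edgeRel E) p.2 b)) := by
  have hne : a ≠ b := fun h => hH b (h ▸ hab)
  have h0 : signedSum (H ∩ S.sym2) (fun E => TwoConnOn S (addEdge (edgeRel E) a b)) = 0 := by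
    refine signedSum_eq_zero_of_insert (e := s(a, b)) (by simp [hab, ha, hb]) fun E _ => ?_
    rw [edgeRel_insert, addEdge_idem]
  rw [eq_neg_iff_add_eq_zero, ← h0, Finset.sum_congr rfl
    (g := fun p => signedSum (H ∩ S.sym2) fun E => IsFirstBlock S b (edgeRel E) p.1 p.2)
    fun p hp => by
      simp only [Finset.mem_filter, Finset.mem_product, Finset.mem_powerset] at hp
      exact (signedSum_isFirstBlock hH hp.1.1 hp.2.2.2.1).symm]
  unfold twoConnSum signedSum
  simp only [Finset.sum_filter _ (fun E : Finset (Sym2 V) => (-1 : ℤ) ^ E.card)]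
  rw [Finset.sum_comm, ← Finset.sum_add_distrib]
  refine Finset.sum_congr rfl fun E hE => ?_
  rw [← Finset.sum_filter]
  by_cases h1 : TwoConnOn S (edgeRel E)
  · have h2 : TwoConnOn S (addEdge (edgeRel E) a b) := h1.mono fun x y h => Or.inl h
    rw [if_pos h1, if_pos h2, Finset.filter_false_of_mem]
    · simp
    · rintro p hp hF
      simp only [Finset.mem_filter, Finset.mem_product, Finset.mem_powerset] at hp
      exact hF.not_twoConnOn hp.2.1 hp.1.1 hb hp.2.2.1 hp.2.2.2.1 hp.2.2.2.2 h1
  rw [if_neg h1, zero_add]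
  by_cases h2 : TwoConnOn S (addEdge (edgeRel E) a b)
  · obtain ⟨B, c, hBS, haB, hbB, hcB, hca, hF⟩ :=
      exists_isFirstBlock edgeRel_symm h3 ha hb hne h2 h1
    rw [if_pos h2]
    convert Finset.sum_singleton _ (B, c)
    refine Finset.eq_singleton_iff_unique_mem.2 ⟨?_, ?_⟩
    · simp only [Finset.mem_filter, Finset.mem_product, Finset.mem_powerset]
      exact ⟨⟨⟨hBS, hBS hcB⟩, haB, hbB, hcB, hca⟩, hF⟩
    · rintro ⟨B', c'⟩ hp
      simp only [Finset.mem_filter, Finset.mem_product, Finset.mem_powerset] at hp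
      obtain ⟨⟨⟨hBS', -⟩, haB', hbB', hcB', hca'⟩, hF'⟩ := hp
      obtain ⟨rfl, rfl⟩ := hF.unique haB haB' hBS hBS' hb hbB hcB hcB' hca hca' hF'
      rfl
  · rw [if_neg h2, Finset.filter_false_of_mem, Finset.sum_empty]
    rintro p hp hF
    simp only [Finset.mem_filter, Finset.mem_product, Finset.mem_powerset] at hp
    exact h2 (hF.twoConnOn_insert hp.2.1 hp.1.1 hb hp.2.2.1 hp.2.2.2.1 hp.2.2.2.2)

end SignedSums

section Simplicial

variable {V : Type*} [DecidableEq V] {S B : Finset V} {H E : Finset (Sym2 V)} {a b c : V}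

theorem twoConnSum_eq_zero_of_isolated (h2 : 2 ≤ S.card) (ha : a ∈ S)
    (hiso : ∀ x ∈ S, s(a, x) ∉ H) : twoConnSum H S = 0 := by
  unfold twoConnSum signedSum
  rw [Finset.filter_false_of_mem, Finset.sum_empty]
  intro E hE hT
  rw [Finset.mem_powerset] at hE
  obtain ⟨x, hx, hxa⟩ := Finset.exists_mem_ne (by omega : 1 < S.card) a
  refine hxa (hT.2.1 (fun y => y = a) ?_ a ha x hx rfl)
  rintro _ - y hy hxy rfl
  exact (hiso y hy (Finset.mem_inter.1 (hE hxy)).1).elim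

theorem twoConnSum_pair (hab : a ≠ b) (hH : ∀ x, s(x, x) ∉ H) (h : s(a, b) ∈ H) :
    twoConnSum H {a, b} = -1 := by
  have hU : H ∩ ({a, b} : Finset V).sym2 = {s(a, b)} := by
    ext ⟨x, y⟩
    have := hH x
    have hs : s(b, a) ∈ H := by rwa [Sym2.eq_swap]
    simp only [Finset.mem_inter, Finset.mk_mem_sym2_iff, Finset.mem_insert, Finset.mem_singleton,
      Sym2.eq_iff]
    grind
  unfold twoConnSum signedSum
  rw [hU, Finset.sum_filter, ← insert_empty_eq, Finset.sum_powerset_insert (by simp),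
    Finset.powerset_empty, Finset.sum_singleton, Finset.sum_singleton, if_neg, if_pos]
  · simp
  · refine ⟨(Finset.card_pair hab).ge, ?_, fun c => ?_⟩
    · intro A hA x hx y hy hxA
      by_cases hxy : x = y
      · exact hxy ▸ hxA
      · refine hA x hx y hy ?_ hxA
        simp only [edgeRel, insert_empty_eq, Finset.mem_singleton, Sym2.eq_iff,
          Finset.mem_insert] at *
        grind
    · intro A hA x hx y hy hxA
      by_cases hxy : x = y
      · exact hxy ▸ hxA
      · refine hA x hx y hy ?_ hxA
        simp only [edgeRel, insert_empty_eq, Finset.mem_singleton, Sym2.eq_iff,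
          Finset.mem_insert, Finset.mem_erase] at *
        grind
  · rintro ⟨-, h, -⟩
    refine hab.symm (h (fun x => x = a) ?_ a (by simp) b (by simp) rfl)
    simp [edgeRel]

theorem signedSum_connOn_pair (hcb : c ≠ b) (hH : ∀ x, s(x, x) ∉ H) (h : s(c, b) ∈ H) :
    signedSum (H ∩ ({c, b} : Finset V).sym2) (fun E => ConnOn {c, b} (edgeRel E) ∧
      TwoConnOn {c, b} (addEdge (edgeRel E) c b)) = -1 := by
  rw [← twoConnSum_pair hcb hH h, twoConnSum]
  congr 1
  ext E
  constructor
  · rintro ⟨h, h'⟩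
    refine ⟨h'.1, h, fun x A hA y hy z hz hAy => ?_⟩
    by_cases hyz : y = z
    · exact hyz ▸ hAy
    · have := hA y hy z hz
      have h1 := h (fun w => w = y)
      have h2 := edgeRel_symm (E := E) y z
      have h3 := edgeRel_symm (E := E) z y
      refine this ?_ hAy
      by_contra hno
      refine hyz (h1 ?_ y (Finset.mem_of_mem_erase hy) z (Finset.mem_of_mem_erase hz) rfl).symm
      simp only [Finset.mem_insert, Finset.mem_singleton, Finset.mem_erase] at *
      grind
  · exact fun h => ⟨h.2.1, h.mono fun x y => Or.inl⟩

theorem signedSum_connOn_eq_zero (h3 : 3 ≤ S.card) (hc : c ∈ S) (hb : b ∈ S) (hcb : c ≠ b)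
    (h : s(c, b) ∈ H) :
    signedSum (H ∩ S.sym2) (fun E => ConnOn S (edgeRel E) ∧
      TwoConnOn S (addEdge (edgeRel E) c b)) = 0 := by
  have : (fun E => ConnOn S (edgeRel E) ∧ TwoConnOn S (addEdge (edgeRel E) c b)) =
      fun E => TwoConnOn S (addEdge (edgeRel E) c b) := by
    ext E
    exact and_iff_right_of_imp (connOn_of_twoConnOn_insert h3 hc hb hcb)
  rw [this]
  refine signedSum_eq_zero_of_insert (e := s(c, b)) (by simp [h, hc, hb]) fun E _ => ?_
  rw [edgeRel_insert, addEdge_idem]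

theorem twoConnSum_of_simplicial (hH : ∀ x, s(x, x) ∉ H) (h2 : 2 ≤ S.card) (ha : a ∈ S)
    (hs : ∀ x ∈ S, ∀ y ∈ S, s(a, x) ∈ H → s(a, y) ∈ H → x ≠ y → s(x, y) ∈ H) :
    twoConnSum H S = if ∀ x ∈ S, x ≠ a → s(a, x) ∈ H then -((S.card - 2).factorial : ℤ) else 0 := by
  induction hk : S.card using Nat.strong_induction_on generalizing S with
  | _ k ih =>
  subst hk
  by_cases hiso : ∀ x ∈ S, s(a, x) ∉ H
  · rw [twoConnSum_eq_zero_of_isolated h2 ha hiso, if_neg]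
    obtain ⟨x, hx, hxa⟩ := Finset.exists_mem_ne (by omega : 1 < S.card) a
    exact fun h => hiso x hx (h x hx hxa)
  push Not at hiso
  obtain ⟨b, hb, hab⟩ := hiso
  have hne : a ≠ b := fun h => hH b (h ▸ hab)
  rcases h2.eq_or_lt with h2 | h3
  · have hS : {a, b} = S :=
      Finset.eq_of_subset_of_card_le (by grind) (by rw [Finset.card_pair hne]; omega)
    subst hS
    rw [twoConnSum_pair hne hH hab, if_pos (by grind), ← h2]
    simp
  have hcard := Finset.card_erase_of_mem hb
  have key := twoConnSum_eq_neg_sum hH h3 ha hb hab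
  have hterm : ∀ p ∈ (S.powerset ×ˢ S).filter
        (fun p => a ∈ p.1 ∧ b ∉ p.1 ∧ p.2 ∈ p.1 ∧ p.2 ≠ a),
      twoConnSum H p.1 * signedSum (H ∩ (insert p.2 (S \ p.1)).sym2) (fun E =>
        ConnOn (insert p.2 (S \ p.1)) (edgeRel E) ∧
          TwoConnOn (insert p.2 (S \ p.1)) (addEdge (edgeRel E) p.2 b)) =
      if p.1 = S.erase b then -twoConnSum H (S.erase b) else 0 := by
    rintro ⟨B, c⟩ hp
    simp only [Finset.mem_filter, Finset.mem_product, Finset.mem_powerset] at hp ⊢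
    obtain ⟨⟨hBS, hcS⟩, haB, hbB, hcB, hca⟩ := hp
    have hcb : c ≠ b := fun h => hbB (h ▸ hcB)
    by_cases hB0 : twoConnSum H B = 0
    · split_ifs with h
      · rw [← h, hB0]; simp
      · rw [hB0, zero_mul]
    have hBlt : B.card < S.card := Finset.card_lt_card
      ⟨hBS, fun h => hbB (h hb)⟩
    have hB2 : 2 ≤ B.card := Finset.one_lt_card.2 ⟨c, hcB, a, haB, hca⟩
    rw [ih _ hBlt hB2 haB (fun x hx y hy => hs x (hBS hx) y (hBS hy)) rfl] at hB0
    have hBa := (ite_ne_right_iff.1 hB0).1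
    have hcbH : s(c, b) ∈ H := hs c hcS b hb (hBa c hcB hca) hab hcb
    split_ifs with h
    · subst h
      have : insert c (S \ S.erase b) = {c, b} := by grind
      rw [this, signedSum_connOn_pair hcb hH hcbH, mul_neg_one]
    · rw [signedSum_connOn_eq_zero _ (by grind) (by grind) hcb hcbH, mul_zero]
      obtain ⟨w, hwS, hwb, hwB⟩ : ∃ w ∈ S, w ≠ b ∧ w ∉ B := by
        by_contra! hcon
        exact h (by grind)
      exact Finset.two_lt_card.2 ⟨c, by grind, b, by grind, w, by grind, hcb, by grind, hwb.symm⟩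
  rw [Finset.sum_congr rfl hterm, ← Finset.sum_filter, Finset.sum_const, smul_neg, neg_neg] at key
  have hcount : (((S.powerset ×ˢ S).filter
      (fun p => a ∈ p.1 ∧ b ∉ p.1 ∧ p.2 ∈ p.1 ∧ p.2 ≠ a)).filter
        fun p => p.1 = S.erase b).card = S.card - 2 := by
    have : ((S.powerset ×ˢ S).filter
      (fun p => a ∈ p.1 ∧ b ∉ p.1 ∧ p.2 ∈ p.1 ∧ p.2 ≠ a)).filter
        (fun p => p.1 = S.erase b) = {S.erase b} ×ˢ (S.erase b).erase a := by
      ext ⟨B, c⟩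
      simp only [Finset.mem_filter, Finset.mem_product, Finset.mem_powerset, Finset.mem_singleton]
      constructor
      · grind
      · rintro ⟨rfl, h⟩
        have := Finset.erase_subset b S
        grind
    rw [this, Finset.card_product, Finset.card_singleton, Finset.card_erase_of_mem (by grind),
      hcard]
    omega
  rw [key, hcount, ih (S.erase b).card (by omega) (by omega) (by grind) (by grind) rfl, hcard]
  have hiff : (∀ x ∈ S.erase b, x ≠ a → s(a, x) ∈ H) ↔ ∀ x ∈ S, x ≠ a → s(a, x) ∈ H := by grind
  simp only [hiff]
  split_ifs
  · obtain ⟨m, hm⟩ : ∃ m, S.card = m + 3 := ⟨S.card - 3, by omega⟩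
    simp only [hm, show m + 3 - 2 = m + 1 by omega, show m + 3 - 1 - 2 = m by omega,
      Nat.factorial_succ]
    push_cast
    simp
  · simp

end Simplicial

section Graphs

variable {V : Type*} [Fintype V] [DecidableEq V]

theorem preconnected_iff_forall_adj {W : Type*} (G : SimpleGraph W) :
    G.Preconnected ↔ ∀ A : W → Prop, (∀ x y, G.Adj x y → A x → A y) → ∀ x y, A x → A y := by
  constructor
  · intro h A hA x y hx
    obtain ⟨p⟩ := h x y
    induction p with
    | nil => exact hx
    | cons hadj _ ih => exact ih (hA _ _ hadj hx)
  · exact fun h x y => h (fun z => G.Reachable x z) (fun u v huv hu => hu.trans huv.reachable) x y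
      (SimpleGraph.Reachable.refl x)

omit [DecidableEq V] in
theorem connOn_univ_iff (G : SimpleGraph V) : ConnOn Finset.univ G.Adj ↔ G.Preconnected := by
  simp [preconnected_iff_forall_adj, ConnOn]

theorem connOn_erase_iff (G : SimpleGraph V) (v : V) :
    ConnOn (Finset.univ.erase v) G.Adj ↔ (G.induce ({v}ᶜ : Set V)).Preconnected := by
  rw [preconnected_iff_forall_adj, ConnOn]
  constructor
  · intro h A hA x y hx
    obtain ⟨hy, hAy⟩ := h (fun z => ∃ hz : z ∈ ({v}ᶜ : Set V), A ⟨z, hz⟩)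
      (fun u hu w hw huw ⟨hu', hAu⟩ => ⟨by simpa using hw, hA ⟨u, hu'⟩ ⟨w, _⟩ huw hAu⟩)
      x (Finset.mem_erase.2 ⟨x.2, Finset.mem_univ _⟩) y (Finset.mem_erase.2 ⟨y.2, Finset.mem_univ _⟩)
      ⟨x.2, hx⟩
    exact hAy
  · intro h A hA x hx y hy
    refine h (fun z => A z) (fun u w huw => hA u (Finset.mem_erase.2 ⟨u.2, Finset.mem_univ _⟩) w
      (Finset.mem_erase.2 ⟨w.2, Finset.mem_univ _⟩) huw)
      ⟨x, by simpa using hx⟩ ⟨y, by simpa using hy⟩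

theorem twoConnected_iff_twoConnOn (G : SimpleGraph V) (hV : 2 ≤ Fintype.card V) :
    TwoConnected G ↔ TwoConnOn Finset.univ G.Adj := by
  have : Nontrivial V := Fintype.one_lt_card_iff_nontrivial.1 hV
  have hne : ∀ v : V, Nonempty ({v}ᶜ : Set V) := fun v => by
    obtain ⟨w, hw⟩ := exists_ne v
    exact ⟨⟨w, hw⟩⟩
  simp only [TwoConnected, TwoConnOn, SimpleGraph.connected_iff, connOn_univ_iff, connOn_erase_iff,
    Finset.card_univ, hV, hne, true_and, and_true]
  simp [(inferInstance : Nonempty V)]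

theorem sum_twoConnected_eq_twoConnSum (K : SimpleGraph V) (hV : 2 ≤ Fintype.card V) :
    ∑ G ∈ Finset.univ.filter (fun G : SimpleGraph V => TwoConnected G ∧ G ≤ K),
      (-1 : ℤ) ^ Nat.card G.edgeSet = twoConnSum K.edgeFinset Finset.univ := by
  unfold twoConnSum signedSum
  have hrel : ∀ (G : SimpleGraph V) [Fintype G.edgeSet], edgeRel G.edgeFinset = G.Adj := by
    intro G _
    ext x y
    simp [edgeRel]
  refine Finset.sum_nbij' (fun G => G.edgeFinset)
    (fun E => SimpleGraph.fromEdgeSet (E : Set (Sym2 V))) ?_ ?_ ?_ ?_ ?_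
  · intro G hG
    simp only [Finset.mem_filter, Finset.mem_univ, true_and, Finset.sym2_univ,
      Finset.inter_univ, Finset.mem_powerset] at hG ⊢
    exact ⟨SimpleGraph.edgeFinset_subset_edgeFinset.2 hG.2,
      (hrel G).symm ▸ (twoConnected_iff_twoConnOn G hV).1 hG.1⟩
  · intro E hE
    simp only [Finset.mem_filter, Finset.mem_univ, true_and, Finset.sym2_univ,
      Finset.inter_univ, Finset.mem_powerset] at hE ⊢
    have hadj : (SimpleGraph.fromEdgeSet (E : Set (Sym2 V))).Adj = edgeRel E := by
      ext x y
      simp only [SimpleGraph.fromEdgeSet_adj, Finset.mem_coe, edgeRel, and_iff_left_iff_imp]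
      exact fun h => (SimpleGraph.mem_edgeFinset.1 (hE.1 h) : K.Adj x y).ne
    refine ⟨(twoConnected_iff_twoConnOn _ hV).2 (hadj ▸ hE.2), fun x y hxy => ?_⟩
    rw [hadj] at hxy
    exact SimpleGraph.mem_edgeFinset.1 (hE.1 hxy)
  · intro G _
    simp
  · intro E hE
    simp only [Finset.mem_filter, Finset.sym2_univ,
      Finset.inter_univ, Finset.mem_powerset] at hE
    ext ⟨x, y⟩
    simp only [SimpleGraph.mem_edgeFinset, SimpleGraph.mem_edgeSet, SimpleGraph.fromEdgeSet_adj,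
      Finset.mem_coe, Sym2.mk, and_iff_left_iff_imp]
    exact fun h => (SimpleGraph.mem_edgeFinset.1 (hE.1 h) : K.Adj x y).ne
  · intro G _
    rw [Nat.card_eq_fintype_card, SimpleGraph.edgeFinset_card]

/-- The graph joining two distinct points when their images on the line are at distance less
than `1`. -/
def closeGraph (x : V → ℝ) : SimpleGraph V where
  Adj i j := i ≠ j ∧ |x i - x j| < 1
  symm := ⟨fun i j h => ⟨h.1.symm, by rw [abs_sub_comm]; exact h.2⟩⟩
  loopless := ⟨fun i h => h.1 rfl⟩

theorem sum_twoConnected_le_closeGraph (x : V → ℝ) (hV : 2 ≤ Fintype.card V) :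
    ∑ G ∈ Finset.univ.filter (fun G : SimpleGraph V => TwoConnected G ∧ G ≤ closeGraph x),
      (-1 : ℤ) ^ Nat.card G.edgeSet =
    if closeGraph x = ⊤ then -((Fintype.card V - 2).factorial : ℤ) else 0 := by
  have : Nonempty V := Fintype.card_pos_iff.1 (by omega)
  obtain ⟨a, ha⟩ := Finite.exists_min x
  have hadj : ∀ i j, s(i, j) ∈ (closeGraph x).edgeFinset ↔ i ≠ j ∧ |x i - x j| < 1 := by
    intro i j
    rw [SimpleGraph.mem_edgeFinset]
    rfl
  have hclose : ∀ i j, i ≠ j → s(a, i) ∈ (closeGraph x).edgeFinset ∨ i = a →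
      s(a, j) ∈ (closeGraph x).edgeFinset ∨ j = a → s(i, j) ∈ (closeGraph x).edgeFinset := by
    intro i j hij hi hj
    rw [hadj] at hi hj ⊢
    refine ⟨hij, ?_⟩
    have hi' : x i < x a + 1 := by
      rcases hi with hi | rfl
      · linarith [(abs_lt.1 hi.2).1]
      · linarith
    have hj' : x j < x a + 1 := by
      rcases hj with hj | rfl
      · linarith [(abs_lt.1 hj.2).1]
      · linarith
    rw [abs_lt]
    constructor <;> linarith [ha i, ha j]
  rw [sum_twoConnected_eq_twoConnSum _ hV, twoConnSum_of_simplicial (a := a) _ hV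
    (Finset.mem_univ a), Finset.card_univ]
  · congr 1
    rw [eq_iff_iff]
    constructor
    · intro h
      rw [eq_top_iff]
      intro i j hij
      refine SimpleGraph.mem_edgeFinset.1 (hclose i j hij ?_ ?_)
      · exact or_iff_not_imp_right.2 (h i (Finset.mem_univ i))
      · exact or_iff_not_imp_right.2 (h j (Finset.mem_univ j))
    · intro h i _ hi
      rw [SimpleGraph.mem_edgeFinset, h]
      exact hi.symm
  · exact fun i _ j _ hi hj hij => hclose i j hij (Or.inl hi) (Or.inl hj)
  · simp

end Graphs

section Volume

variable {n : ℕ}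

theorem isOpen_graphPolytope (G : SimpleGraph (Fin (n + 1))) : IsOpen (graphPolytope n G) := by
  simp only [graphPolytope, Set.ofPred_forall]
  refine isOpen_iInter_of_finite fun i => isOpen_iInter_of_finite fun j =>
    isOpen_iInter_of_finite fun _ => isOpen_lt ?_ continuous_const
  have h : ∀ i : Fin (n + 1), Continuous fun y : Fin n → ℝ => (Fin.cons 0 y : Fin (n + 1) → ℝ) i :=
    fun i => Fin.cases (by simpa using continuous_const)
      (fun k => by simpa using continuous_apply k) i
  exact ((h i).sub (h j)).abs

theorem volume_graphPolytope_lt_top {G : SimpleGraph (Fin (n + 1))} (hG : G.Connected) :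
    volume (graphPolytope n G) < ⊤ := by
  have hwalk : ∀ y ∈ graphPolytope n G, ∀ u v, ∀ p : G.Walk u v,
      |(Fin.cons 0 y : Fin (n + 1) → ℝ) u - (Fin.cons 0 y : Fin (n + 1) → ℝ) v| ≤ p.length := by
    intro y hy u v p
    induction p with
    | nil => simp
    | @cons a b c hadj p ih =>
      have h := hy a b hadj
      rw [SimpleGraph.Walk.length_cons]
      push_cast
      exact (abs_sub_le _ ((Fin.cons 0 y : Fin (n + 1) → ℝ) b) _).trans (by linarith)
  choose p hp using fun j : Fin n => (hG 0 j.succ).exists_walk_length_eq_dist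
  refine (measure_mono (t := Set.Icc (fun j => -((p j).length : ℝ)) (fun j => (p j).length))
    fun y hy => ?_).trans_lt isCompact_Icc.measure_lt_top
  have := fun j => abs_le.1 (hwalk y hy _ _ (p j))
  simp only [Fin.cons_zero, Fin.cons_succ, zero_sub] at this
  exact ⟨fun j => by linarith [(this j).2], fun j => by linarith [(this j).1]⟩

/-- The change of coordinates which moves the origin of the line from the point `0` to the
point `k + 1`. -/
def recenter (k : Fin n) : (Fin n → ℝ) →ₗ[ℝ] (Fin n → ℝ) where
  toFun y j := if j = k then -y k else y j - y k
  map_add' y z := by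
    ext j
    simp only [Pi.add_apply]
    split_ifs <;> ring
  map_smul' c y := by
    ext j
    simp only [Pi.smul_apply, smul_eq_mul, RingHom.id_apply]
    split_ifs <;> ring

theorem recenter_comp_self (k : Fin n) : recenter k ∘ₗ recenter k = LinearMap.id := by
  ext1 y
  ext j
  by_cases hj : j = k <;> simp [recenter, hj]

theorem volume_preimage_recenter (k : Fin n) (s : Set (Fin n → ℝ)) :
    volume (recenter k ⁻¹' s) = volume s := by
  have hdet : LinearMap.det (recenter k) * LinearMap.det (recenter k) = 1 := by
    rw [← LinearMap.det_comp, recenter_comp_self, LinearMap.det_id]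
  have habs : |LinearMap.det (recenter k)| = 1 := by
    rcases mul_self_eq_one_iff.1 hdet with h | h <;> simp [h]
  rw [Measure.addHaar_preimage_linearMap _ (left_ne_zero_of_mul_eq_one hdet), abs_inv, habs]
  simp

theorem volume_forall_sub_mem (i : Fin (n + 1)) (I : Set ℝ) :
    volume {y : Fin n → ℝ | ∀ j, j ≠ i →
      (Fin.cons 0 y : Fin (n + 1) → ℝ) j - (Fin.cons 0 y : Fin (n + 1) → ℝ) i ∈ I} =
    volume I ^ n := by
  have hpi : volume (Set.univ.pi fun _ : Fin n => I) = volume I ^ n := by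
    rw [volume_pi_pi]
    simp
  rw [← hpi]
  cases i using Fin.cases with
  | zero =>
    congr 1
    ext y
    simp [Fin.forall_fin_succ]
  | succ k =>
    rw [← volume_preimage_recenter k (Set.univ.pi fun _ => I)]
    congr 1
    ext y
    simp only [ne_eq, Set.mem_ofPred_eq, Fin.forall_fin_succ, Fin.cons_zero, Fin.cons_succ, zero_sub,
      Fin.succ_inj, Set.mem_preimage, Set.mem_pi, Set.mem_univ, forall_const, recenter,
      LinearMap.coe_mk, AddHom.coe_mk]
    constructor
    · rintro ⟨h, h'⟩ j
      split_ifs with hj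
      · exact h (Fin.succ_ne_zero k).symm
      · exact h' j hj
    · exact fun h => ⟨fun _ => by simpa using h k, fun j hj => by simpa [hj] using h j⟩

theorem volume_graphPolytope_top : volume (graphPolytope n ⊤) = n + 1 := by
  refine le_antisymm ?_ ?_
  · calc volume (graphPolytope n ⊤)
        ≤ volume (⋃ i : Fin (n + 1), {y : Fin n → ℝ | ∀ j, j ≠ i →
            (Fin.cons 0 y : Fin (n + 1) → ℝ) j - (Fin.cons 0 y : Fin (n + 1) → ℝ) i ∈
              Set.Icc (0 : ℝ) 1}) := by
          refine measure_mono fun y hy => ?_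
          obtain ⟨i, hi⟩ := Finite.exists_min (Fin.cons 0 y : Fin (n + 1) → ℝ)
          refine Set.mem_iUnion.2 ⟨i, fun j hj => ⟨sub_nonneg.2 (hi j), ?_⟩⟩
          exact (le_abs_self _).trans (hy j i hj).le
      _ ≤ ∑ i : Fin (n + 1), 1 := by
          refine (measure_iUnion_fintype_le _ _).trans (Finset.sum_le_sum fun i _ => ?_)
          rw [volume_forall_sub_mem]
          simp
      _ = n + 1 := by simp
  · set U : Fin (n + 1) → Set (Fin n → ℝ) := fun i => {y : Fin n → ℝ | ∀ j, j ≠ i →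
      (Fin.cons 0 y : Fin (n + 1) → ℝ) j - (Fin.cons 0 y : Fin (n + 1) → ℝ) i ∈
        Set.Ioo (0 : ℝ) 1} with hU
    have hvol : ∀ i, volume (U i) = 1 := fun i => by
      rw [hU, volume_forall_sub_mem]
      simp
    have hmeas : ∀ i, MeasurableSet (U i) := fun i => by
      have h : ∀ i : Fin (n + 1), Measurable fun y : Fin n → ℝ =>
          (Fin.cons 0 y : Fin (n + 1) → ℝ) i := fun i =>
        Fin.cases (by simp) (fun k => by simpa using measurable_pi_apply k) i
      simp only [hU, Set.ofPred_forall]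
      exact MeasurableSet.iInter fun j => MeasurableSet.iInter fun _ =>
        ((h j).sub (h i)) measurableSet_Ioo
    have hdisj : Pairwise (Function.onFun Disjoint U) := fun i j hij =>
      Set.disjoint_left.2 fun y hi hj => by
        linarith [(hi j hij.symm).1, (hj i hij).1]
    calc (n + 1 : ENNReal) = ∑ i, volume (U i) := by simp [hvol]
      _ = volume (⋃ i, U i) := by rw [measure_iUnion hdisj hmeas, tsum_fintype]
      _ ≤ volume (graphPolytope n ⊤) := by
          refine measure_mono (Set.iUnion_subset fun i y hy j k hjk => ?_)
          have h : ∀ l, l = i ∨ (Fin.cons 0 y : Fin (n + 1) → ℝ) l -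
              (Fin.cons 0 y : Fin (n + 1) → ℝ) i ∈ Set.Ioo (0 : ℝ) 1 :=
            fun l => or_iff_not_imp_left.2 (hy l)
          rw [abs_lt]
          rcases h j with rfl | ⟨hj, hj'⟩
          · rcases h k with rfl | ⟨hk, hk'⟩
            · exact (hjk rfl).elim
            · constructor <;> linarith
          · rcases h k with rfl | ⟨hk, hk'⟩ <;> constructor <;> linarith

end Volume

theorem mem_graphPolytope_iff {n : ℕ} {G : SimpleGraph (Fin (n + 1))} {y : Fin n → ℝ} :
    y ∈ graphPolytope n G ↔ G ≤ closeGraph (Fin.cons 0 y : Fin (n + 1) → ℝ) :=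
  ⟨fun h i j hij => ⟨hij.ne, h i j hij⟩, fun h _ _ hij => (h hij).2⟩

theorem sum_twoConnected_indicator {n : ℕ} (hn : 1 ≤ n) (y : Fin n → ℝ) :
    ∑ G ∈ Finset.univ.filter (fun G : SimpleGraph (Fin (n + 1)) => TwoConnected G),
      (-1 : ℝ) ^ Nat.card G.edgeSet * (graphPolytope n G).indicator 1 y =
    -((n - 1).factorial : ℝ) * (graphPolytope n ⊤).indicator 1 y := by
  have h := sum_twoConnected_le_closeGraph (Fin.cons 0 y : Fin (n + 1) → ℝ) (by simpa using hn)
  rw [← Finset.filter_filter, Finset.sum_filter, Fintype.card_fin,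
    show n + 1 - 2 = n - 1 by omega] at h
  have h' := congrArg (Int.cast : ℤ → ℝ) h
  push_cast at h'
  simp only [Set.indicator_apply, mem_graphPolytope_iff, Pi.one_apply, mul_ite, mul_one, mul_zero,
    top_le_iff]
  exact h'

/-- The sum over all two-connected graphs `G` on a vertex set of size `n+1` of
`(-1)^(e(G))` times the volume of `Π_G` equals `-(n+1)·(n-1)!`
(i.e. `-m·(m-2)!` for `m = n+1` vertices). -/
theorem twoConnected_polytope_alternating_sum (n : ℕ) (hn : 1 ≤ n) :
    ∑ G ∈ Finset.univ.filter (fun G : SimpleGraph (Fin (n + 1)) => TwoConnected G),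
      (-1 : ℝ) ^ (Nat.card G.edgeSet) * (volume (graphPolytope n G)).toReal
      = -((n + 1 : ℝ) * (Nat.factorial (n - 1) : ℝ)) := by
  have integral_eq : ∀ G : SimpleGraph (Fin (n + 1)),
      ∫ y, (graphPolytope n G).indicator (1 : (Fin n → ℝ) → ℝ) y = (volume (graphPolytope n G)).toReal := fun G =>
    integral_indicator_one (isOpen_graphPolytope G).measurableSet
  simp only [← integral_eq, ← integral_const_mul]
  rw [← integral_finsetSum _ fun G hG => ?_]
  · simp only [sum_twoConnected_indicator hn]
    rw [integral_const_mul, integral_eq, volume_graphPolytope_top]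
    have : ((n : ENNReal) + 1).toReal = n + 1 := by
      exact_mod_cast ENNReal.toReal_natCast (n + 1)
    rw [this]
    ring
  · refine Integrable.const_mul ?_ _
    rw [integrable_indicator_iff (isOpen_graphPolytope G).measurableSet]
    exact integrableOn_const (volume_graphPolytope_lt_top (Finset.mem_filter.1 hG).2.1).ne
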